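/- (Recursion for ℬ) For every N ≥ 1 and every u ∈ ℂ: ℬ^(N+1)(u) = b(u)c(u) E⁺₋ ⊗ 𝒜^(N)(u) + a(u)b(u) I ⊗ ℬ^(N)(u) + b(u)c(u) E⁺₋ ⊗ 𝒟^(N)(u), where the first tensor factor acts on the new site N+1 and the size-N operators act on sites N,…,1. -/

import Mathlib

noncomputable section
open Complex Matrix

/-- Spin configurations of a chain of `N` sites: `true` encodes `v₊`, `false` encodes `v₋`.
The site with label `i ∈ {1,…,N}` corresponds to the index `i-1 : Fin N`
(so the leftmost site `N` is the index `N-1`). -/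
abbrev Conf (N : ℕ) := Fin N → Bool

/-- The combinatorial-point parameter `η = 2πi/3`. -/
def ηc : ℂ := 2 * (Real.pi : ℂ) * Complex.I / 3

/-- `a(u) = sinh(u+η)/sinh η`. -/
def aF (u : ℂ) : ℂ := Complex.sinh (u + ηc) / Complex.sinh ηc
/-- `b(u) = sinh(u)/sinh η`. -/
def bF (u : ℂ) : ℂ := Complex.sinh u / Complex.sinh ηc
/-- `c(u) = 1`. -/
def cF (_ : ℂ) : ℂ := 1
/-- `d(u) = sinh(u-η)/sinh η`. -/
def dF (u : ℂ) : ℂ := Complex.sinh (u - ηc) / Complex.sinh ηc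
/-- The R-matrix `R(u)` on `V⊗V` in the ordered basis `(v₊⊗v₊, v₊⊗v₋, v₋⊗v₊, v₋⊗v₋)`:
`[[a,0,0,0],[0,b,c,0],[0,c,b,0],[0,0,0,a]]`. -/
def Rm (u : ℂ) : Matrix (Bool × Bool) (Bool × Bool) ℂ :=
  Matrix.of fun o i =>
    if o = i then (if o.1 = o.2 then aF u else bF u)
    else if o.1 = i.2 ∧ o.2 = i.1 ∧ o.1 ≠ o.2 then cF u
    else 0

/-- The boundary K-matrix `K⁻(u) = diag(d(u), -a(u))` in the basis `(v₊, v₋)`. -/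
def Km (u : ℂ) : Matrix Bool Bool ℂ :=
  Matrix.of fun o i => if o = i then (if o then dF u else -aF u) else 0

/-- `R₀ᵢ(u)`: the matrix `R(u)` applied to `V₀ ⊗ Vᵢ` (auxiliary space first), identity
elsewhere, on `V₀ ⊗ V^⊗N`; here the site with label `i` is the index `i-1`. -/
def R0i (N : ℕ) (u : ℂ) (i : Fin N) :
    Matrix (Bool × Conf N) (Bool × Conf N) ℂ :=
  Matrix.of fun x y =>
    if ∀ j, j ≠ i → x.2 j = y.2 j then Rm u (x.1, x.2 i) (y.1, y.2 i) else 0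

/-- `Rᵢ₀(u)`: the matrix `R(u)` applied to `Vᵢ ⊗ V₀` (auxiliary space second), identity
elsewhere, on `V₀ ⊗ V^⊗N`. -/
def Ri0 (N : ℕ) (u : ℂ) (i : Fin N) :
    Matrix (Bool × Conf N) (Bool × Conf N) ℂ :=
  Matrix.of fun x y =>
    if ∀ j, j ≠ i → x.2 j = y.2 j then Rm u (x.2 i, x.1) (y.2 i, y.1) else 0

/-- `T^(N)(u) = R₀₁(u) R₀₂(u) ⋯ R₀N(u)`. -/
def Tmono (N : ℕ) (u : ℂ) : Matrix (Bool × Conf N) (Bool × Conf N) ℂ :=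
  (List.ofFn fun i : Fin N => R0i N u i).prod

/-- `T̄^(N)(u) = R_{N0}(u) ⋯ R_{20}(u) R_{10}(u)`. -/
def Tbar (N : ℕ) (u : ℂ) : Matrix (Bool × Conf N) (Bool × Conf N) ℂ :=
  (List.ofFn fun i : Fin N => Ri0 N u i).reverse.prod

/-- `K₀⁻(u)`: the matrix `K⁻(u)` acting on the auxiliary space `V₀`, identity on `V^⊗N`. -/
def K0m (N : ℕ) (u : ℂ) : Matrix (Bool × Conf N) (Bool × Conf N) ℂ :=
  Matrix.of fun x y => if x.2 = y.2 then Km u x.1 y.1 else 0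

/-- The double-row monodromy matrix `U^(N)(u) = T̄^(N)(u) K₀⁻(u) T^(N)(u)`. -/
def Umono (N : ℕ) (u : ℂ) : Matrix (Bool × Conf N) (Bool × Conf N) ℂ :=
  Tbar N u * K0m N u * Tmono N u

/-- `𝒜^(N)(u)`: the `(v₊, v₊)` auxiliary-space block of `U^(N)(u)`. -/
def Aop (N : ℕ) (u : ℂ) : Matrix (Conf N) (Conf N) ℂ :=
  Matrix.of fun s t => Umono N u (true, s) (true, t)
/-- `ℬ^(N)(u)`: the `(v₊, v₋)` auxiliary-space block of `U^(N)(u)`. -/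
def Bop (N : ℕ) (u : ℂ) : Matrix (Conf N) (Conf N) ℂ :=
  Matrix.of fun s t => Umono N u (true, s) (false, t)
/-- `𝒞^(N)(u)`: the `(v₋, v₊)` auxiliary-space block of `U^(N)(u)`. -/
def Cop (N : ℕ) (u : ℂ) : Matrix (Conf N) (Conf N) ℂ :=
  Matrix.of fun s t => Umono N u (false, s) (true, t)
/-- `𝒟^(N)(u)`: the `(v₋, v₋)` auxiliary-space block of `U^(N)(u)`. -/
def Dop (N : ℕ) (u : ℂ) : Matrix (Conf N) (Conf N) ℂ :=
  Matrix.of fun s t => Umono N u (false, s) (false, t)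

/-- The transfer matrix
`t^(N)(u) = (sinh u / sinh η) 𝒜^(N)(u) - (sinh(u+2η)/sinh η) 𝒟^(N)(u)`. -/
def tOp (N : ℕ) (u : ℂ) : Matrix (Conf N) (Conf N) ℂ :=
  (Complex.sinh u / Complex.sinh ηc) • Aop N u
    - (Complex.sinh (u + 2 * ηc) / Complex.sinh ηc) • Dop N u

/-- The pseudovacuum `Ω^(N) = v₊ ⊗ ⋯ ⊗ v₊`. -/
def Omega (N : ℕ) : Conf N → ℂ := fun s => if ∀ j, s j = true then 1 else 0

/-- `E^ε ⊗ X : V^⊗(n+2) → V^⊗(n+1)`: the linear functional `E^ε : V → ℂ`, `v_ε ↦ 1`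
(zero on the other basis vector), applied to the leftmost site `N = n+2`, tensored with
the operator `X` on the remaining sites `n+1,…,1`.  Here `e = true` encodes `ε = +`. -/
def Etens (n : ℕ) (e : Bool) (X : Matrix (Conf (n + 1)) (Conf (n + 1)) ℂ) :
    Matrix (Conf (n + 1)) (Conf (n + 2)) ℂ :=
  Matrix.of fun o i =>
    (if i (Fin.last (n + 1)) = e then 1 else 0) * X o (fun j => i (Fin.castSucc j))

/-- `F ⊗ X` : the one-site operator `F` applied to the leftmost site `N+1` of a chain of
`N+1` sites, tensored with the operator `X` on the remaining sites `N,…,1`. -/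
def siteTens (N : ℕ) (F : Matrix Bool Bool ℂ) (X : Matrix (Conf N) (Conf N) ℂ) :
    Matrix (Conf (N + 1)) (Conf (N + 1)) ℂ :=
  Matrix.of fun o i =>
    F (o (Fin.last N)) (i (Fin.last N)) * X (fun j => o (Fin.castSucc j)) (fun j => i (Fin.castSucc j))

/-- `E^ε_{ε'} : V → V` sends `v_ε ↦ v_{ε'}` and the other basis vector to `0`
(`true` encodes `+`). -/
def Eop (e e' : Bool) : Matrix Bool Bool ℂ :=
  Matrix.of fun o i => if i = e ∧ o = e' then 1 else 0

/-!
Grouping the entries by the auxiliary space turns operators on `V₀ ⊗ V^⊗N` into `2 × 2` matrices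
of operators on `V^⊗N`, compatibly with products. Only the outermost factors of `U^(N+1)` touch the
new site, and `R` is invariant under exchanging its two factors, so both of them are the matrix
`L(u)` of one-site operators obtained by grouping `R(u)` in the same way. Hence the `(p, q)` block of
`U^(N+1)` is `∑ L_{pr} L_{sq} ⊗ U^(N)_{rs}`, and the recursion for `ℬ` (`p = +`, `q = -`) is read off
from the products `L₊₊ L₊₋`, `L₊₊ L₋₋`, `L₊₋ L₊₋ = 0` and `L₊₋ L₋₋`.
-/

open scoped Kronecker

section SiteTens

variable (N : ℕ)

theorem siteTens_eq_submatrix_kronecker (F : Matrix Bool Bool ℂ) (X : Matrix (Conf N) (Conf N) ℂ) :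
    siteTens N F X =
      (F ⊗ₖ X).submatrix (Fin.snocEquiv fun _ => Bool).symm (Fin.snocEquiv fun _ => Bool).symm :=
  rfl

theorem siteTens_one_one : siteTens N 1 1 = 1 := by
  rw [siteTens_eq_submatrix_kronecker, one_kronecker_one, submatrix_one_equiv]

theorem siteTens_mul_siteTens (F G : Matrix Bool Bool ℂ) (X Y : Matrix (Conf N) (Conf N) ℂ) :
    siteTens N F X * siteTens N G Y = siteTens N (F * G) (X * Y) := by
  simp only [siteTens_eq_submatrix_kronecker, submatrix_mul_equiv, mul_kronecker_mul]

theorem siteTens_add_right (F : Matrix Bool Bool ℂ) (X Y : Matrix (Conf N) (Conf N) ℂ) :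
    siteTens N F (X + Y) = siteTens N F X + siteTens N F Y := by
  rw [siteTens_eq_submatrix_kronecker, kronecker_add]
  rfl

theorem siteTens_zero_left (X : Matrix (Conf N) (Conf N) ℂ) : siteTens N 0 X = 0 := by
  rw [siteTens_eq_submatrix_kronecker, zero_kronecker]
  rfl

theorem siteTens_zero_right (F : Matrix Bool Bool ℂ) : siteTens N F 0 = 0 := by
  rw [siteTens_eq_submatrix_kronecker, kronecker_zero]
  rfl

theorem siteTens_smul_left (k : ℂ) (F : Matrix Bool Bool ℂ) (X : Matrix (Conf N) (Conf N) ℂ) :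
    siteTens N (k • F) X = k • siteTens N F X := by
  rw [siteTens_eq_submatrix_kronecker, smul_kronecker]
  rfl

/-- The embedding `X ↦ I ⊗ X` of operators on `N` sites into operators on `N + 1` sites. -/
def addSite : Matrix (Conf N) (Conf N) ℂ →+* Matrix (Conf (N + 1)) (Conf (N + 1)) ℂ where
  toFun X := siteTens N 1 X
  map_one' := siteTens_one_one N
  map_mul' X Y := by rw [siteTens_mul_siteTens, one_mul]
  map_zero' := siteTens_zero_right N 1
  map_add' := siteTens_add_right N 1

theorem addSite_apply (X : Matrix (Conf N) (Conf N) ℂ) : addSite N X = siteTens N 1 X := rfl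

end SiteTens

theorem Eop_eq_single (e e' : Bool) : Eop e e' = single e' e 1 := by
  ext o i
  simp [Eop, single_apply, and_comm, eq_comm]

theorem Eop_mul_Eop (e e' f f' : Bool) :
    Eop f f' * Eop e e' = if e' = f then Eop e f' else 0 := by
  simp only [Eop_eq_single]
  split_ifs with h
  · rw [h, single_mul_single_same, one_mul]
  · rw [single_mul_single_of_ne _ _ _ _ (Ne.symm h)]

theorem Eop_true_true_add_Eop_false_false : Eop true true + Eop false false = 1 := by
  ext o i
  cases o <;> cases i <;> simp [Eop]

/-- The Lax operator: the R-matrix as a `2 × 2` matrix, indexed by the basis of the auxiliary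
space, of operators on a single site. -/
def laxOp (u : ℂ) : Matrix Bool Bool (Matrix Bool Bool ℂ) :=
  (compRingEquiv Bool Bool ℂ).symm (Rm u)

theorem laxOp_apply (u : ℂ) (p q s t : Bool) : laxOp u p q s t = Rm u (p, s) (q, t) := rfl

theorem laxOp_true_true (u : ℂ) :
    laxOp u true true = aF u • Eop true true + bF u • Eop false false := by
  ext s t
  cases s <;> cases t <;> simp [laxOp_apply, Rm, Eop]

theorem laxOp_true_false (u : ℂ) : laxOp u true false = cF u • Eop true false := by
  ext s t
  cases s <;> cases t <;> simp [laxOp_apply, Rm, Eop]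

theorem laxOp_false_false (u : ℂ) :
    laxOp u false false = bF u • Eop true true + aF u • Eop false false := by
  ext s t
  cases s <;> cases t <;> simp [laxOp_apply, Rm, Eop]

theorem laxOp_true_true_mul_true_false (u : ℂ) :
    laxOp u true true * laxOp u true false = (bF u * cF u) • Eop true false := by
  simp [laxOp_true_true, laxOp_true_false, add_mul, Eop_mul_Eop, smul_smul, mul_comm]

theorem laxOp_true_true_mul_false_false (u : ℂ) :
    laxOp u true true * laxOp u false false = (aF u * bF u) • 1 := by
  simp [laxOp_true_true, laxOp_false_false, add_mul, mul_add, Eop_mul_Eop, smul_smul,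
    mul_comm (bF u), ← smul_add, Eop_true_true_add_Eop_false_false]

theorem laxOp_true_false_mul_self (u : ℂ) : laxOp u true false * laxOp u true false = 0 := by
  simp [laxOp_true_false, Eop_mul_Eop]

theorem laxOp_true_false_mul_false_false (u : ℂ) :
    laxOp u true false * laxOp u false false = (bF u * cF u) • Eop true false := by
  simp [laxOp_true_false, laxOp_false_false, mul_add, Eop_mul_Eop, smul_smul]

theorem Rm_swap (u : ℂ) (x y : Bool × Bool) : Rm u x.swap y.swap = Rm u x y := by
  obtain ⟨p, s⟩ := x
  obtain ⟨q, t⟩ := y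
  cases p <;> cases s <;> cases q <;> cases t <;> simp [Rm]

/-- An operator on `V₀ ⊗ V^⊗N` as a `2 × 2` matrix, indexed by the basis of the auxiliary space
`V₀`, of operators on `V^⊗N`. -/
def auxBlocks (N : ℕ) : Matrix (Bool × Conf N) (Bool × Conf N) ℂ ≃+*
    Matrix Bool Bool (Matrix (Conf N) (Conf N) ℂ) :=
  (compRingEquiv Bool (Conf N) ℂ).symm

theorem auxBlocks_apply {N : ℕ} (M : Matrix (Bool × Conf N) (Bool × Conf N) ℂ) (p q : Bool)
    (s t : Conf N) : auxBlocks N M p q s t = M (p, s) (q, t) := rfl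

/-- The Lax operator acting on the last site `N + 1` of a chain of `N + 1` sites. -/
def laxLast (N : ℕ) (u : ℂ) : Matrix Bool Bool (Matrix (Conf (N + 1)) (Conf (N + 1)) ℂ) :=
  (laxOp u).map fun F => siteTens N F 1

theorem laxLast_apply (N : ℕ) (u : ℂ) (p q : Bool) :
    laxLast N u p q = siteTens N (laxOp u p q) 1 := rfl

section Recursion

variable (N : ℕ) (u : ℂ)

theorem Ri0_eq_R0i (i : Fin N) : Ri0 N u i = R0i N u i := by
  ext x y
  simp only [Ri0, R0i, of_apply, ← Rm_swap u (x.1, _), Prod.swap_prod_mk]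

theorem auxBlocks_R0i_castSucc (i : Fin N) :
    auxBlocks (N + 1) (R0i (N + 1) u i.castSucc) =
      (addSite N).mapMatrix (auxBlocks N (R0i N u i)) := by
  ext p q s t
  simp [auxBlocks_apply, addSite_apply, siteTens, R0i, Fin.forall_fin_succ', one_apply,
    (Fin.castSucc_ne_last i).symm, ite_and]

theorem auxBlocks_R0i_last :
    auxBlocks (N + 1) (R0i (N + 1) u (Fin.last N)) = laxLast N u := by
  ext p q s t
  simp [auxBlocks_apply, laxLast_apply, siteTens, R0i, laxOp_apply, Fin.forall_fin_succ', one_apply,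
    funext_iff]

theorem auxBlocks_K0m_succ :
    auxBlocks (N + 1) (K0m (N + 1) u) = (addSite N).mapMatrix (auxBlocks N (K0m N u)) := by
  ext p q s t
  simp [auxBlocks_apply, addSite_apply, siteTens, K0m, Fin.forall_fin_succ', one_apply, funext_iff,
    ite_and]

theorem auxBlocks_Tmono_succ :
    auxBlocks (N + 1) (Tmono (N + 1) u) =
      (addSite N).mapMatrix (auxBlocks N (Tmono N u)) * laxLast N u := by
  simp only [Tmono, List.ofFn_succ', List.prod_concat, map_mul, map_list_prod, List.map_ofFn,
    Function.comp_def, auxBlocks_R0i_castSucc, auxBlocks_R0i_last]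

theorem auxBlocks_Tbar_succ :
    auxBlocks (N + 1) (Tbar (N + 1) u) =
      laxLast N u * (addSite N).mapMatrix (auxBlocks N (Tbar N u)) := by
  simp only [Tbar, Ri0_eq_R0i, List.ofFn_succ', List.concat_eq_append, List.reverse_concat,
    List.prod_cons, map_mul, map_list_prod, List.map_reverse, List.map_ofFn, Function.comp_def,
    auxBlocks_R0i_castSucc, auxBlocks_R0i_last]

theorem auxBlocks_Umono_succ :
    auxBlocks (N + 1) (Umono (N + 1) u) =
      laxLast N u * (addSite N).mapMatrix (auxBlocks N (Umono N u)) * laxLast N u := by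
  simp only [Umono, map_mul, auxBlocks_Tbar_succ, auxBlocks_K0m_succ, auxBlocks_Tmono_succ,
    mul_assoc]

theorem auxBlocks_Umono_succ_apply (p q : Bool) :
    auxBlocks (N + 1) (Umono (N + 1) u) p q =
      ∑ r, ∑ s, siteTens N (laxOp u p r * laxOp u s q) (auxBlocks N (Umono N u) r s) := by
  rw [auxBlocks_Umono_succ, mul_assoc]
  simp only [mul_apply, Finset.mul_sum, laxLast_apply, RingHom.mapMatrix_apply, map_apply,
    addSite_apply, siteTens_mul_siteTens, one_mul, mul_one]

end Recursion

/-- recursion for ℬ: for every `N ≥ 1` and every `u ∈ ℂ`,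
`ℬ^(N+1)(u) = bc E⁺₋ ⊗ 𝒜^(N) + ab I ⊗ ℬ^(N) + bc E⁺₋ ⊗ 𝒟^(N)`,
the first factor acting on the new (leftmost) site `N+1`. -/
theorem B_recursion (N : ℕ) (hN : 1 ≤ N) (u : ℂ) :
    Bop (N + 1) u
      = (bF u * cF u) • siteTens N (Eop true false) (Aop N u)
        + (aF u * bF u) • siteTens N (1 : Matrix Bool Bool ℂ) (Bop N u)
        + (bF u * cF u) • siteTens N (Eop true false) (Dop N u) := by
  calc Bop (N + 1) u
      = ∑ r, ∑ s, siteTens N (laxOp u true r * laxOp u s false) (auxBlocks N (Umono N u) r s) :=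
        auxBlocks_Umono_succ_apply N u true false
    _ = siteTens N ((bF u * cF u) • Eop true false) (Aop N u)
          + siteTens N ((aF u * bF u) • 1) (Bop N u)
        + (siteTens N 0 (Cop N u)
          + siteTens N ((bF u * cF u) • Eop true false) (Dop N u)) := by
        simp only [Fintype.sum_bool, laxOp_true_true_mul_true_false,
          laxOp_true_true_mul_false_false, laxOp_true_false_mul_self,
          laxOp_true_false_mul_false_false]
        rfl
    _ = _ := by
        simp only [siteTens_smul_left, siteTens_zero_left, zero_add]
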